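/- arXiv:1006.3542 — 2 statements merged into one kernel-verified Lean document; each statement's English description precedes it below -/
import Mathlib

section
/- Suppose f is differentiable on an open set U ⊆ (0,∞), and let P = (p₁,…,p_m) ∈ (ℝ²)^m be a configuration such that for every barycenter b ∈ B the index i(b) minimizing ‖b − p_i‖ is unique, p_{i(b)} ≠ b, and ‖b − p_{i(b)}‖ ∈ U. Then H is differentiable at P, and for each h ∈ {1,…,m} the partial gradient with respect to p_h is ∂H/∂p_h = Σ_{b : i(b) = h} φ_b · f′(‖b − p_h‖) · (p_h − b)/‖b − p_h‖. -/
/-!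
STATEMENT 1: If `f` is differentiable on an open set `U ⊆ (0,∞)` and at the
configuration `P` every barycenter `b ∈ B` has a unique nearest sensor `ι b`,
with `P (ι b) ≠ b` and `‖b − P (ι b)‖ ∈ U`, then the multi-center function
`H(P) = Σ_{b∈B} f(dist(b,P)) φ_b` is differentiable at `P` and its partial
gradient with respect to `p_h` is
`Σ_{b : ι b = h} φ_b · f′(‖b − p_h‖) · (p_h − b)/‖b − p_h‖`.
-/

noncomputable abbrev E2 : Type := EuclideanSpace ℝ (Fin 2)

/-!
Near `P` the nearest sensor of each barycenter does not change, because the finitely many competing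
distances are continuous and strictly larger. Hence `H` agrees near `P` with
`Q ↦ ∑ b, f ‖b - Q (ι b)‖ * φ b`, in which each term depends on a single sensor. The chain rule
gives its total derivative, and restricting it to the `h`-th factor keeps the terms with `ι b = h`.
-/

open Filter Topology

lemma lt_of_unique_minimizer {I α : Type*} [PartialOrder α] {g : I → α} {i : I}
    (hmin : ∀ j, g i ≤ g j) (huniq : ∀ j, (∀ k, g j ≤ g k) → j = i) {j : I} (hj : j ≠ i) :
    g i < g j :=
  (hmin j).lt_of_ne fun heq => hj (huniq j (heq ▸ hmin))

lemma eventually_ciInf_eq_of_forall_lt {X I α : Type*} [TopologicalSpace X] [Finite I]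
    [ConditionallyCompleteLinearOrder α] [TopologicalSpace α] [OrderClosedTopology α]
    {g : I → X → α} {x : X} {i : I} (hg : ∀ j, ContinuousAt (g j) x)
    (hlt : ∀ j, j ≠ i → g i x < g j x) :
    ∀ᶠ y in 𝓝 x, ⨅ j, g j y = g i y := by
  have eventually_le : ∀ j, ∀ᶠ y in 𝓝 x, g i y ≤ g j y := fun j => by
    obtain rfl | hj := eq_or_ne j i
    · exact .of_forall fun _ => le_rfl
    · exact ((hg i).eventually_lt (hg j) (hlt j hj)).mono fun _ => le_of_lt
  filter_upwards [eventually_all.2 eventually_le] with y hy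
  have : Nonempty I := ⟨i⟩
  exact le_antisymm (ciInf_le (Set.finite_range _).bddBelow i) (le_ciInf hy)

section MultiCenter

variable {E I : Type*} [SeminormedAddCommGroup E]

/-- The multi-center function `H(Q) = ∑ b ∈ B, f(dist(b, Q)) φ_b` of a family of sensors `Q`, where
the distance to the nearest sensor is written as an infimum (a minimum when `I` is finite and
nonempty). -/
noncomputable def multiCenter (B : Finset E) (φ : E → ℝ) (f : ℝ → ℝ) (Q : I → E) : ℝ :=
  ∑ b ∈ B, f (⨅ i, ‖b - Q i‖) * φ b

lemma multiCenter_eventuallyEq [Finite I] {B : Finset E} {P : I → E} {ι : E → I}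
    (φ : E → ℝ) (f : ℝ → ℝ)
    (hlt : ∀ b ∈ B, ∀ j, j ≠ ι b → ‖b - P (ι b)‖ < ‖b - P j‖) :
    multiCenter B φ f =ᶠ[𝓝 P] fun Q => ∑ b ∈ B, f ‖b - Q (ι b)‖ * φ b := by
  have hnearest : ∀ b ∈ B, ∀ᶠ Q in 𝓝 P, ⨅ i, ‖b - Q i‖ = ‖b - Q (ι b)‖ := fun b hb =>
    eventually_ciInf_eq_of_forall_lt (g := fun i (Q : I → E) => ‖b - Q i‖)
      (fun i => (continuous_const.sub (continuous_apply i)).norm.continuousAt) (hlt b hb)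
  filter_upwards [(eventually_all_finset B).2 hnearest] with Q hQ
  exact Finset.sum_congr rfl fun b hb => by rw [hQ b hb]

end MultiCenter

section InnerProductSpace

variable {E I : Type*} [NormedAddCommGroup E] [InnerProductSpace ℝ E]

lemma hasFDerivAt_norm_of_ne_zero {x : E} (hx : x ≠ 0) :
    HasFDerivAt (fun y : E => ‖y‖) (‖x‖⁻¹ • innerSL ℝ x) x := by
  have hsqrt := (hasStrictFDerivAt_norm_sq x).hasFDerivAt.sqrt (by positivity)
  simp only [Real.sqrt_sq (norm_nonneg _)] at hsqrt
  refine hsqrt.congr_fderiv ?_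
  module

lemma hasFDerivAt_comp_norm_sub_mul_const {f : ℝ → ℝ} {b q : E} (hne : q ≠ b)
    (hf : DifferentiableAt ℝ f ‖b - q‖) (c : ℝ) :
    HasFDerivAt (fun p : E => f ‖b - p‖ * c)
      (innerSL ℝ ((c * deriv f ‖b - q‖ / ‖b - q‖) • (q - b))) q := by
  have hnorm : HasFDerivAt (fun p : E => ‖b - p‖) _ q :=
    (hasFDerivAt_norm_of_ne_zero (sub_ne_zero.2 hne.symm)).comp q
      ((hasFDerivAt_id q).const_sub b)
  refine ((hf.hasDerivAt.comp_hasFDerivAt q hnorm).mul_const c).congr_fderiv ?_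
  simp only [map_sub, map_smul, ContinuousLinearMap.comp_neg, ContinuousLinearMap.comp_id]
  module

variable [Finite I] {B : Finset E} {f : ℝ → ℝ} {P : I → E} {ι : E → I}

lemma hasFDerivAt_multiCenter (φ : E → ℝ)
    (hlt : ∀ b ∈ B, ∀ j, j ≠ ι b → ‖b - P (ι b)‖ < ‖b - P j‖)
    (hne : ∀ b ∈ B, P (ι b) ≠ b)
    (hf : ∀ b ∈ B, DifferentiableAt ℝ f ‖b - P (ι b)‖) :
    HasFDerivAt (multiCenter B φ f)
      (∑ b ∈ B,
        innerSL ℝ ((φ b * deriv f ‖b - P (ι b)‖ / ‖b - P (ι b)‖) • (P (ι b) - b)) ∘L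
          ContinuousLinearMap.proj (ι b)) P := by
  have := Fintype.ofFinite I
  refine HasFDerivAt.congr_of_eventuallyEq ?_ (multiCenter_eventuallyEq φ f hlt)
  exact .fun_sum fun b hb =>
    HasFDerivAt.comp (f := fun Q : I → E => Q (ι b)) P
      (hasFDerivAt_comp_norm_sub_mul_const (hne b hb) (hf b hb) (φ b)) (hasFDerivAt_apply (ι b) P)

lemma hasGradientAt_comp_update_of_sum_innerSL_proj [CompleteSpace E] [DecidableEq I]
    {H : (I → E) → ℝ} {κ : Type*} {s : Finset κ} {v : κ → E} {i : κ → I}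
    (hH : HasFDerivAt H (∑ k ∈ s, innerSL ℝ (v k) ∘L ContinuousLinearMap.proj (i k)) P) (h : I) :
    HasGradientAt (fun q => H (Function.update P h q)) (∑ k ∈ s with i k = h, v k) (P h) := by
  have := Fintype.ofFinite I
  rw [← Function.update_eq_self h P] at hH
  rw [hasGradientAt_iff_hasFDerivAt]
  refine (hH.comp (P h) (hasFDerivAt_update P (P h))).congr_fderiv ?_
  rw [Finset.sum_filter, map_sum, ContinuousLinearMap.finsetSum_comp]
  refine Finset.sum_congr rfl fun k _ => ?_
  ext w
  split_ifs with hk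
  · simp [hk]
  · simp [hk]

theorem multicenter_collapsed_gradient_general [CompleteSpace E] [DecidableEq I] (φ : E → ℝ)
    (hlt : ∀ b ∈ B, ∀ j, j ≠ ι b → ‖b - P (ι b)‖ < ‖b - P j‖)
    (hne : ∀ b ∈ B, P (ι b) ≠ b)
    (hf : ∀ b ∈ B, DifferentiableAt ℝ f ‖b - P (ι b)‖) :
    DifferentiableAt ℝ (multiCenter B φ f) P ∧
    ∀ h : I,
      HasGradientAt (fun q => multiCenter B φ f (Function.update P h q))
        (∑ b ∈ B with ι b = h, (φ b * deriv f ‖b - P h‖ / ‖b - P h‖) • (P h - b)) (P h) := by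
  have hH := hasFDerivAt_multiCenter φ hlt hne hf
  refine ⟨hH.differentiableAt, fun h => ?_⟩
  convert hasGradientAt_comp_update_of_sum_innerSL_proj hH h using 1
  refine Finset.sum_congr rfl fun b hb => ?_
  rw [(Finset.mem_filter.1 hb).2]

end InnerProductSpace

theorem multicenter_collapsed_gradient
    (B : Finset E2) (hB : B.Nonempty)
    (φ : E2 → ℝ) (hφ : ∀ b ∈ B, 0 ≤ φ b)
    (f : ℝ → ℝ) (U : Set ℝ) (hUopen : IsOpen U) (hUpos : U ⊆ Set.Ioi 0)
    (hf : DifferentiableOn ℝ f U)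
    (m : ℕ) (hm : 0 < m) (P : Fin m → E2)
    (ι : E2 → Fin m)
    (hmin : ∀ b ∈ B, ∀ j, ‖b - P (ι b)‖ ≤ ‖b - P j‖)
    (huniq : ∀ b ∈ B, ∀ j, (∀ k, ‖b - P j‖ ≤ ‖b - P k‖) → j = ι b)
    (hne : ∀ b ∈ B, P (ι b) ≠ b)
    (hU : ∀ b ∈ B, ‖b - P (ι b)‖ ∈ U) :
    DifferentiableAt ℝ
      (fun Q : Fin m → E2 => ∑ b ∈ B, f (⨅ i, ‖b - Q i‖) * φ b) P ∧
    ∀ h : Fin m,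
      HasGradientAt
        (fun q : E2 => ∑ b ∈ B, f (⨅ i, ‖b - Function.update P h q i‖) * φ b)
        (∑ b ∈ B.filter (fun b => ι b = h),
          (φ b * deriv f ‖b - P h‖ / ‖b - P h‖) • (P h - b))
        (P h) := by
  exact multicenter_collapsed_gradient_general φ
    (fun b hb _ => lt_of_unique_minimizer (hmin b hb) (huniq b hb)) hne
    fun b hb => hf.differentiableAt (hUopen.mem_nhds (hU b hb))
end

section
/- Let R₀ = 0 < R₁ < … < R_N < R_{N+1} = +∞, let F_α : ℝ × ℝ → ℝ (α = 1,…,N+1) be continuously differentiable, and define the piecewise function F(v,t) = F_α(v,t) for v ∈ [R_{α−1}, R_α). Let ν : ℝ × ℝ → ℝ be continuously differentiable, and fix x̄ ∈ ℝ such that: (i) ν(x̄,0) ∉ {R₁,…,R_N} and ν(x̄,1) ∉ {R₁,…,R_N}; (ii) for each i ∈ {1,…,N} the set {t ∈ [0,1] : ν(x̄,t) = R_i} is finite, say {t_{i,1},…,t_{i,k_i}} ⊂ (0,1), and ∂ν/∂t(x̄, t_{i,j}) ≠ 0 at each such point. Then the function g(x) = ∫₀¹ F(ν(x,t), t) dt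 is differentiable at x̄, with g′(x̄) = ∫₀¹ ∂F/∂v(ν(x̄,t), t) · ∂ν/∂x(x̄,t) dt + Σ_{i=1}^{N} Σ_{j=1}^{k_i} (F_{i+1}(R_i, t_{i,j}) − F_i(R_i, t_{i,j})) · (∂ν/∂x(x̄, t_{i,j})) / |∂ν/∂t(x̄, t_{i,j})|. -/
/-!
Telescoping over the levels writes `F v t` as the smooth function `F₁ v t` plus one term
`1_{[R_i, ∞)}(v) • G_i v t` per level, where `G_i = F_{i+1} - F_i`, and the claimed formula is
additive over these terms. For a single term, split `G (ν x t) t` as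
`(G (ν x t) t - G (ν x₀ t) t) + G (ν x₀ t) t`. The first summand is Lipschitz at `x₀` in spite of
the indicator, because it vanishes at `x = x₀`; dominated convergence gives its contribution, the
integral term. In the second summand only the domain of integration `{t | R_i ≤ ν x t}` moves.
Its endpoints are the crossing times, whose speed is `-∂ₓν / ∂ₜν` by the implicit function theorem;
at an upward crossing the point is a left endpoint and at a downward one a right endpoint, which is
how the absolute value of `∂ₜν` arises.
-/

open Set Filter Topology MeasureTheory Function
open scoped Interval

variable {E : Type*} [NormedAddCommGroup E] [NormedSpace ℝ E]

section PartialDerivatives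

variable {f : ℝ → ℝ → E}

lemma fderiv_uncurry_apply {x t : ℝ} (hf : DifferentiableAt ℝ (uncurry f) (x, t)) (u w : ℝ) :
    fderiv ℝ (uncurry f) (x, t) (u, w) = u • deriv (f · t) x + w • deriv (f x) t := by
  have h_fst : HasDerivAt (f · t) (fderiv ℝ (uncurry f) (x, t) (1, 0)) x :=
    hf.hasFDerivAt.comp_hasDerivAt (f := (·, t)) x
      ((hasDerivAt_id' x).prodMk (hasDerivAt_const x t))
  have h_snd : HasDerivAt (f x) (fderiv ℝ (uncurry f) (x, t) (0, 1)) t :=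
    hf.hasFDerivAt.comp_hasDerivAt t ((hasDerivAt_const t x).prodMk (hasDerivAt_id' t))
  rw [h_fst.deriv, h_snd.deriv, ← map_smul, ← map_smul, ← map_add]
  simp

lemma differentiable_partial_fst (hf : ContDiff ℝ 1 (uncurry f)) (t : ℝ) :
    Differentiable ℝ (f · t) :=
  (hf.differentiable one_ne_zero).comp (differentiable_id.prodMk (differentiable_const t))

lemma continuous_partialDeriv_fst (hf : ContDiff ℝ 1 (uncurry f)) :
    Continuous fun q : ℝ × ℝ => deriv (f · q.2) q.1 := by
  have h : ∀ q : ℝ × ℝ, deriv (f · q.2) q.1 = fderiv ℝ (uncurry f) q (1, 0) := fun q => by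
    simp [fderiv_uncurry_apply (hf.differentiable one_ne_zero (q.1, q.2))]
  simp only [h]
  exact (hf.continuous_fderiv one_ne_zero).clm_apply continuous_const

lemma continuous_partialDeriv_snd (hf : ContDiff ℝ 1 (uncurry f)) :
    Continuous fun q : ℝ × ℝ => deriv (f q.1) q.2 := by
  have h : ∀ q : ℝ × ℝ, deriv (f q.1) q.2 = fderiv ℝ (uncurry f) q (0, 1) := fun q => by
    simp [fderiv_uncurry_apply (hf.differentiable one_ne_zero (q.1, q.2))]
  simp only [h]
  exact (hf.continuous_fderiv one_ne_zero).clm_apply continuous_const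

lemma exists_norm_sub_le_mul_norm_sub_of_contDiff (hf : ContDiff ℝ 1 (uncurry f)) (x₀ : ℝ)
    {s : Set ℝ} (hs : IsCompact s) :
    ∃ B, ∀ t ∈ s, ∀ x ∈ Metric.closedBall x₀ 1, ‖f x t - f x₀ t‖ ≤ B * ‖x - x₀‖ := by
  obtain ⟨B, hB⟩ := ((isCompact_closedBall x₀ 1).prod hs).exists_bound_of_continuousOn
    (continuous_partialDeriv_fst hf).continuousOn
  refine ⟨B, fun t ht x hx => ?_⟩
  exact (convex_closedBall x₀ 1).norm_image_sub_le_of_norm_deriv_le (f := (f · t))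
    (fun y _ => differentiable_partial_fst hf t y) (fun y hy => hB (y, t) ⟨hy, ht⟩)
    (Metric.mem_closedBall_self zero_le_one) hx

end PartialDerivatives

section CrossingTime

variable {ν : ℝ → ℝ → ℝ} {x₀ t₀ : ℝ}

lemma exists_hasDerivAt_crossingTime (hν : ContDiff ℝ 1 (uncurry ν))
    (hne : deriv (ν x₀) t₀ ≠ 0) :
    ∃ τ : ℝ → ℝ, τ x₀ = t₀ ∧ HasDerivAt τ (-(deriv (ν · t₀) x₀ / deriv (ν x₀) t₀)) x₀ ∧
      ∀ᶠ x in 𝓝 x₀, ν x (τ x) = ν x₀ t₀ := by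
  have hdiff : DifferentiableAt ℝ (uncurry ν) (x₀, t₀) := hν.differentiable one_ne_zero _
  have hinv : (fderiv ℝ (uncurry ν) (x₀, t₀) ∘L .inr ℝ ℝ ℝ).IsInvertible :=
    ⟨ContinuousLinearEquiv.unitsEquivAut ℝ (Units.mk0 _ hne), by
      ext; simp [fderiv_uncurry_apply hdiff]⟩
  let τ : ℝ → ℝ := hν.contDiffAt.implicitFunction one_ne_zero hinv
  have hτ₀ : τ x₀ = t₀ := hν.contDiffAt.implicitFunction_apply_self one_ne_zero hinv
  have hτν : ∀ᶠ x in 𝓝 x₀, ν x (τ x) = ν x₀ t₀ :=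
    hν.contDiffAt.eventually_apply_implicitFunction one_ne_zero hinv
  have hτ : HasDerivAt τ (deriv τ x₀) x₀ :=
    (hν.contDiffAt.hasStrictFDerivAt_implicitFunction one_ne_zero hinv).hasFDerivAt
      |>.differentiableAt.hasDerivAt
  have hzero : deriv (ν · t₀) x₀ + deriv τ x₀ * deriv (ν x₀) t₀ = 0 := by
    have hcomp : HasDerivAt (fun x => ν x (τ x))
        (fderiv ℝ (uncurry ν) (x₀, t₀) (1, deriv τ x₀)) x₀ :=
      hdiff.hasFDerivAt.comp_hasDerivAt_of_eq x₀ ((hasDerivAt_id x₀).prodMk hτ)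
        (by simp [hτ₀])
    have hconst : HasDerivAt (fun x => ν x (τ x)) 0 x₀ :=
      (hasDerivAt_const x₀ (ν x₀ t₀)).congr_of_eventuallyEq hτν
    simpa [fderiv_uncurry_apply hdiff] using hcomp.unique hconst
  have hslope : deriv τ x₀ = -(deriv (ν · t₀) x₀ / deriv (ν x₀) t₀) := by
    field_simp
    linarith
  exact ⟨τ, hτ₀, hslope ▸ hτ, hτν⟩

lemma eventually_strictMonoOn_Icc_of_deriv_pos (hν : ContDiff ℝ 1 (uncurry ν))
    (hpos : 0 < deriv (ν x₀) t₀) :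
    ∀ᶠ δ in 𝓝[>] (0 : ℝ), ∀ᶠ x in 𝓝 x₀, StrictMonoOn (ν x) (Icc (t₀ - δ) (t₀ + δ)) := by
  obtain ⟨r, hr, hball⟩ := Metric.eventually_nhds_iff.1 <|
    ((continuous_partialDeriv_snd hν).tendsto (x₀, t₀)).eventually_const_lt hpos
  filter_upwards [Ioo_mem_nhdsGT hr] with δ hδ
  filter_upwards [Metric.ball_mem_nhds x₀ hr] with x hx
  have hcont : Continuous (ν x) := hν.continuous.uncurry_left x
  refine strictMonoOn_of_deriv_pos (convex_Icc _ _) hcont.continuousOn fun t ht => ?_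
  rw [interior_Icc, ← Real.ball_eq_Ioo] at ht
  exact hball (y := (x, t)) (max_lt hx (ht.trans hδ.2))

end CrossingTime

section Indicator

lemma intervalIntegrable_indicator_comp {G X : Type*} [NormedAddCommGroup G] [MeasurableSpace X]
    {μ : Measure ℝ} {a b : ℝ} {f : ℝ → X} {g : ℝ → G} {A : Set X} (hA : MeasurableSet A)
    (hf : Measurable f) (hg : IntervalIntegrable g μ a b) :
    IntervalIntegrable (fun t => A.indicator (fun _ => g t) (f t)) μ a b :=
  ⟨hg.1.indicator (hf hA), hg.2.indicator (hf hA)⟩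

lemma eventually_mem_iff_of_notMem_frontier {X : Type*} [TopologicalSpace X] {A : Set X} {v : X}
    (hv : v ∉ frontier A) : ∀ᶠ w in 𝓝 v, (w ∈ A ↔ v ∈ A) := by
  rw [← mem_compl_iff, compl_frontier_eq_union_interior] at hv
  rcases hv with hv | hv <;> have hvA := interior_subset hv
  · filter_upwards [mem_interior_iff_mem_nhds.1 hv] with w hw using iff_of_true hw hvA
  · filter_upwards [mem_interior_iff_mem_nhds.1 hv] with w hw using iff_of_false hw hvA

lemma hasDerivAt_indicator_of_notMem_frontier {A : Set ℝ} {f : ℝ → E} {f' : E} {v : ℝ}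
    (hv : v ∉ frontier A) (hf : HasDerivAt f f' v) :
    HasDerivAt (A.indicator f) (A.indicator (fun _ => f') v) v := by
  have hA := eventually_mem_iff_of_notMem_frontier hv
  by_cases hvA : v ∈ A
  · rw [indicator_of_mem hvA]
    exact hf.congr_of_eventuallyEq <| hA.mono fun w hw => indicator_of_mem (hw.2 hvA) f
  · rw [indicator_of_notMem hvA]
    exact (hasDerivAt_const v 0).congr_of_eventuallyEq <|
      hA.mono fun w hw => indicator_of_notMem (hw.not.2 hvA) f

end Indicator

section Localization

variable {a b δ : ℝ}

lemma eventually_Ioc_sub_add_subset {t : ℝ} (ht : t ∈ Ioo a b) :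
    ∀ᶠ δ in 𝓝[>] (0 : ℝ), Ioc (t - δ) (t + δ) ⊆ Ioc a b := by
  filter_upwards [Ioo_mem_nhdsGT (sub_pos.2 ht.1), Ioo_mem_nhdsGT (sub_pos.2 ht.2)] with δ hl hr
  exact Ioc_subset_Ioc (by linarith [hl.2]) (by linarith [hr.2])

lemma eventually_pairwiseDisjoint_Ioc_sub_add (S : Finset ℝ) :
    ∀ᶠ δ in 𝓝[>] (0 : ℝ), (S : Set ℝ).PairwiseDisjoint fun t => Ioc (t - δ) (t + δ) := by
  simp only [Set.PairwiseDisjoint, Set.Pairwise, Finset.mem_coe, eventually_all_finset,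
    eventually_imp_distrib_left]
  intro s _ t _ hst
  have hdist : 0 < |s - t| / 2 := half_pos (abs_pos.2 (sub_ne_zero.2 hst))
  filter_upwards [Ioo_mem_nhdsGT hdist] with δ hδ
  refine Set.disjoint_left.2 fun u (hus : u ∈ Ioc (s - δ) (s + δ))
    (hut : u ∈ Ioc (t - δ) (t + δ)) => ?_
  have : |s - t| < 2 * δ :=
    abs_lt.2 ⟨by linarith [hus.2, hut.1], by linarith [hus.1, hut.2]⟩
  linarith [hδ.2]

lemma integral_eq_sum_integral_sub_add {g : ℝ → E} {S : Finset ℝ} (hab : a ≤ b) (hδ : 0 ≤ δ)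
    (hg : IntervalIntegrable g volume a b)
    (hdisj : (S : Set ℝ).PairwiseDisjoint fun t => Ioc (t - δ) (t + δ))
    (hsub : ∀ t ∈ S, Ioc (t - δ) (t + δ) ⊆ Ioc a b)
    (hzero : ∀ s ∈ Ioc a b \ ⋃ t ∈ S, Ioc (t - δ) (t + δ), g s = 0) :
    ∫ s in a..b, g s = ∑ t ∈ S, ∫ s in (t - δ)..(t + δ), g s := by
  have hgab : IntegrableOn g (Ioc a b) := (intervalIntegrable_iff_integrableOn_Ioc_of_le hab).1 hg
  rw [intervalIntegral.integral_of_le hab,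
    setIntegral_eq_of_subset_of_forall_sdiff_eq_zero measurableSet_Ioc (iUnion₂_subset hsub) hzero,
    integral_biUnion_finset S (fun _ _ => measurableSet_Ioc) hdisj
      fun t ht => hgab.mono_set (hsub t ht)]
  exact Finset.sum_congr rfl fun t _ => (intervalIntegral.integral_of_le (by linarith)).symm

lemma eventually_eq_off_iUnion_Ioc {X Y : Type*} [TopologicalSpace X] {f : X → ℝ → Y} {x₀ : X}
    {S : Finset ℝ} (hδ : 0 < δ)
    (hoff : ∀ t ∈ Icc a b \ S, ∀ᶠ q in 𝓝 (x₀, t), f q.1 q.2 = f x₀ q.2) :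
    ∀ᶠ x in 𝓝 x₀, ∀ s ∈ Ioc a b \ ⋃ t ∈ S, Ioc (t - δ) (t + δ), f x s = f x₀ s := by
  have hcompact : IsCompact (Icc a b \ ⋃ t ∈ S, Ioo (t - δ) (t + δ)) :=
    isCompact_Icc.diff (isOpen_biUnion fun _ _ => isOpen_Ioo)
  have hmono : ⋃ t ∈ S, Ioo (t - δ) (t + δ) ⊆ ⋃ t ∈ S, Ioc (t - δ) (t + δ) :=
    iUnion₂_mono fun _ _ => Ioo_subset_Ioc_self
  have hev : ∀ᶠ x in 𝓝 x₀, ∀ s ∈ Icc a b \ ⋃ t ∈ S, Ioo (t - δ) (t + δ), f x s = f x₀ s :=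
    hcompact.eventually_forall_of_forall_eventually fun t ht =>
      hoff t ⟨ht.1, fun htS => ht.2 (mem_iUnion₂.2 ⟨t, htS, by simpa using hδ⟩)⟩
  exact hev.mono fun x hx s hs => hx s (sdiff_subset_sdiff Ioc_subset_Icc_self hmono hs)

lemma hasDerivAt_integral_of_eventuallyEq_off_finset {f : ℝ → ℝ → E} {x₀ : ℝ} {S : Finset ℝ}
    {D : ℝ → E} (hab : a ≤ b) (hS : (S : Set ℝ) ⊆ Ioo a b)
    (hf : ∀ x, IntervalIntegrable (f x) volume a b)
    (hoff : ∀ t ∈ Icc a b \ S, ∀ᶠ q in 𝓝 (x₀, t), f q.1 q.2 = f x₀ q.2)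
    (hon : ∀ t ∈ S, ∀ᶠ δ in 𝓝[>] (0 : ℝ),
      HasDerivAt (fun x => ∫ s in (t - δ)..(t + δ), f x s) (D t) x₀) :
    HasDerivAt (fun x => ∫ t in a..b, f x t) (∑ t ∈ S, D t) x₀ := by
  obtain ⟨δ, hD, hsub, hdisj, hδ : 0 < δ⟩ :=
    (((eventually_all_finset S).2 hon).and <|
      ((eventually_all_finset S).2 fun t ht => eventually_Ioc_sub_add_subset (hS ht)).and <|
        (eventually_pairwiseDisjoint_Ioc_sub_add S).and self_mem_nhdsWithin).exists
  have hsum : HasDerivAt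
      (fun x => (∫ s in a..b, f x₀ s) + ∑ t ∈ S,
        ((∫ s in (t - δ)..(t + δ), f x s) - ∫ s in (t - δ)..(t + δ), f x₀ s))
      (∑ t ∈ S, D t) x₀ :=
    (HasDerivAt.fun_sum fun t ht => (hD t ht).sub_const _).const_add _
  refine hsum.congr_of_eventuallyEq ?_
  filter_upwards [eventually_eq_off_iUnion_Ioc hδ hoff] with x hx
  have hlocal : ∀ y, ∀ t ∈ S, IntervalIntegrable (f y) volume (t - δ) (t + δ) := fun y t ht =>
    (intervalIntegrable_iff_integrableOn_Ioc_of_le (by linarith)).2 <|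
      ((intervalIntegrable_iff_integrableOn_Ioc_of_le hab).1 (hf y)).mono_set (hsub t ht)
  rw [← sub_eq_iff_eq_add', ← intervalIntegral.integral_sub (hf x) (hf x₀),
    integral_eq_sum_integral_sub_add hab hδ.le ((hf x).sub (hf x₀)) hdisj hsub
      fun s hs => sub_eq_zero.2 (hx s hs)]
  exact Finset.sum_congr rfl fun t ht =>
    intervalIntegral.integral_sub (hlocal x t ht) (hlocal x₀ t ht)

end Localization

section Superlevel

variable {ν : ℝ → ℝ → ℝ} {K : ℝ → E} {a b x₀ : ℝ}

lemma integral_indicator_Ici_comp_of_strictMonoOn {f : ℝ → ℝ} {τ : ℝ}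
    (hf : StrictMonoOn f (Icc a b)) (hτ : τ ∈ Ioc a b) :
    ∫ t in a..b, (Ici (f τ)).indicator (fun _ => K t) (f t) = ∫ t in τ..b, K t := by
  have hIcc : Ioc a b ∩ Ici τ = Icc τ b := by
    ext t
    exact ⟨fun h => ⟨h.2, h.1.2⟩, fun h => ⟨⟨hτ.1.trans_le h.1, h.2⟩, h.1⟩⟩
  have hind : ∀ t ∈ Ioc a b,
      (Ici (f τ)).indicator (fun _ => K t) (f t) = (Ici τ).indicator K t := fun t ht => by
    simp only [indicator, mem_Ici,
      hf.le_iff_le (Ioc_subset_Icc_self hτ) (Ioc_subset_Icc_self ht)]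
  rw [intervalIntegral.integral_of_le (hτ.1.le.trans hτ.2),
    intervalIntegral.integral_of_le hτ.2, setIntegral_congr_fun measurableSet_Ioc hind,
    setIntegral_indicator measurableSet_Ici, hIcc, integral_Icc_eq_integral_Ioc]

variable [CompleteSpace E]

lemma hasDerivAt_integral_superlevel_of_deriv_pos {t₀ : ℝ} (hν : ContDiff ℝ 1 (uncurry ν))
    (hK : Continuous K) (hpos : 0 < deriv (ν x₀) t₀) :
    ∀ᶠ δ in 𝓝[>] (0 : ℝ), HasDerivAt
      (fun x => ∫ t in (t₀ - δ)..(t₀ + δ), (Ici (ν x₀ t₀)).indicator (fun _ => K t) (ν x t))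
      ((deriv (ν · t₀) x₀ / |deriv (ν x₀) t₀|) • K t₀) x₀ := by
  obtain ⟨τ, hτ₀, hτ, hτν⟩ := exists_hasDerivAt_crossingTime hν hpos.ne'
  filter_upwards [eventually_strictMonoOn_Icc_of_deriv_pos hν hpos, self_mem_nhdsWithin]
    with δ hmono (hδ : 0 < δ)
  have hFTC : HasDerivAt (fun u => ∫ t in u..(t₀ + δ), K t) (-K t₀) t₀ :=
    intervalIntegral.integral_hasDerivAt_left (hK.intervalIntegrable _ _)
      hK.aestronglyMeasurable.stronglyMeasurableAtFilter hK.continuousAt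
  have hcomp : HasDerivAt (fun x => ∫ t in τ x..(t₀ + δ), K t)
      ((deriv (ν · t₀) x₀ / |deriv (ν x₀) t₀|) • K t₀) x₀ := by
    rw [abs_of_pos hpos, ← neg_smul_neg]
    exact hFTC.scomp_of_eq x₀ hτ hτ₀.symm
  refine hcomp.congr_of_eventuallyEq ?_
  have hτIoc : ∀ᶠ x in 𝓝 x₀, τ x ∈ Ioc (t₀ - δ) (t₀ + δ) :=
    hτ.continuousAt.eventually_mem <| Ioc_mem_nhds (by simpa [hτ₀]) (by simpa [hτ₀])
  filter_upwards [hmono, hτν, hτIoc] with x hx hxν hxIoc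
  rw [← hxν, integral_indicator_Ici_comp_of_strictMonoOn hx hxIoc]

lemma hasDerivAt_integral_superlevel_of_deriv_ne_zero {t₀ : ℝ} (hν : ContDiff ℝ 1 (uncurry ν))
    (hK : Continuous K) (hne : deriv (ν x₀) t₀ ≠ 0) :
    ∀ᶠ δ in 𝓝[>] (0 : ℝ), HasDerivAt
      (fun x => ∫ t in (t₀ - δ)..(t₀ + δ), (Ici (ν x₀ t₀)).indicator (fun _ => K t) (ν x t))
      ((deriv (ν · t₀) x₀ / |deriv (ν x₀) t₀|) • K t₀) x₀ := by
  rcases hne.lt_or_gt with hneg | hpos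
  · have hν' : ContDiff ℝ 1 (uncurry fun x t => ν x (-t)) :=
      hν.comp (contDiff_fst.prodMk contDiff_snd.neg)
    have hderiv : deriv (fun t => ν x₀ (-t)) (-t₀) = -deriv (ν x₀) t₀ := by
      rw [deriv_comp_neg, neg_neg]
    have hreflected := hasDerivAt_integral_superlevel_of_deriv_pos hν' (hK.comp continuous_neg)
      (x₀ := x₀) (t₀ := -t₀) (by rw [hderiv]; exact neg_pos.2 hneg)
    filter_upwards [hreflected] with δ hδ
    simp only [hderiv, abs_neg, neg_neg, Function.comp_apply] at hδ
    convert hδ using 2 with x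
    rw [intervalIntegral.integral_comp_neg
      fun t => (Ici (ν x₀ t₀)).indicator (fun _ => K t) (ν x t)]
    congr 1 <;> ring
  · exact hasDerivAt_integral_superlevel_of_deriv_pos hν hK hpos

lemma hasDerivAt_integral_superlevel {c : ℝ} {S : Finset ℝ}
    (hν : ContDiff ℝ 1 (uncurry ν)) (hK : Continuous K) (hab : a ≤ b)
    (ha : ν x₀ a ≠ c) (hb : ν x₀ b ≠ c) (hS : (S : Set ℝ) = {t | t ∈ Icc a b ∧ ν x₀ t = c})
    (hSd : ∀ t ∈ S, deriv (ν x₀) t ≠ 0) :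
    HasDerivAt (fun x => ∫ t in a..b, (Ici c).indicator (fun _ => K t) (ν x t))
      (∑ t ∈ S, (deriv (ν · t) x₀ / |deriv (ν x₀) t|) • K t) x₀ := by
  have hmem : ∀ t, t ∈ S ↔ t ∈ Icc a b ∧ ν x₀ t = c := fun t => Set.ext_iff.1 hS t
  have hcont : ∀ x, Continuous (ν x) := hν.continuous.uncurry_left
  refine hasDerivAt_integral_of_eventuallyEq_off_finset hab (fun t ht => ?_)
    (fun x => intervalIntegrable_indicator_comp measurableSet_Ici (hcont x).measurable
      (hK.intervalIntegrable a b)) (fun t ht => ?_) (fun t ht => ?_)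
  · obtain ⟨htI, htc⟩ := (hmem t).1 ht
    exact ⟨htI.1.lt_of_ne (by rintro rfl; exact ha htc),
      htI.2.lt_of_ne (by rintro rfl; exact hb htc)⟩
  · have hfr : ν x₀ t ∉ frontier (Ici c) := by
      rw [frontier_Ici]
      exact fun htc => ht.2 ((hmem t).2 ⟨ht.1, htc⟩)
    have hev := eventually_mem_iff_of_notMem_frontier hfr
    filter_upwards [(hν.continuous.tendsto (x₀, t)).eventually hev,
      (((hcont x₀).comp continuous_snd).tendsto (x₀, t)).eventually hev] with q hq hq₀
    exact indicator_eq_indicator (hq.trans hq₀.symm) rfl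
  · rw [← ((hmem t).1 ht).2]
    exact hasDerivAt_integral_superlevel_of_deriv_ne_zero hν hK (hSd t ht)

end Superlevel

lemma hasDerivAt_integral_of_dominated_loc_of_norm_sub_le {α : Type*} [MeasurableSpace α]
    {μ : Measure α} {F : ℝ → α → E} {F' : α → E} {bound : α → ℝ} {s : Set ℝ}
    {x₀ : ℝ} (hs : s ∈ 𝓝 x₀) (hF_meas : ∀ x ∈ s, AEStronglyMeasurable (F x) μ)
    (hF_int : Integrable (F x₀) μ) (hF'_meas : AEStronglyMeasurable F' μ)
    (h_lip : ∀ᵐ a ∂μ, ∀ x ∈ s, ‖F x a - F x₀ a‖ ≤ bound a * ‖x - x₀‖)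
    (bound_integrable : Integrable bound μ)
    (h_diff : ∀ᵐ a ∂μ, HasDerivAt (F · a) (F' a) x₀) :
    HasDerivAt (fun x => ∫ a, F x a ∂μ) (∫ a, F' a ∂μ) x₀ := by
  let L : E ≃L[ℝ] (ℝ →L[ℝ] E) := ContinuousLinearMap.toSpanSingletonCLE
  have hderiv := (hasFDerivAt_integral_of_dominated_loc_of_lip' hs hF_meas hF_int
    (L.continuous.comp_aestronglyMeasurable hF'_meas) h_lip bound_integrable
    (h_diff.mono fun _ h => h.hasFDerivAt)).2
  rw [L.integral_comp_comm] at hderiv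
  exact hasDerivAt_iff_hasFDerivAt.2 hderiv

lemma continuous_comp_uncurry_left {X Y Z W : Type*} [TopologicalSpace X] [TopologicalSpace Y]
    [TopologicalSpace Z] [TopologicalSpace W] {ν : X → Y → Z} {G : Z → Y → W}
    (hν : Continuous (uncurry ν)) (hG : Continuous (uncurry G)) (x : X) :
    Continuous fun t => G (ν x t) t :=
  hG.comp ((hν.uncurry_left x).prodMk continuous_id)

section MovingIntegrand

variable {ν : ℝ → ℝ → ℝ} {G : ℝ → ℝ → E} {a b x₀ : ℝ} {A : Set ℝ}

lemma hasDerivAt_indicator_sub_comp {t : ℝ} (hν : ContDiff ℝ 1 (uncurry ν))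
    (hG : ContDiff ℝ 1 (uncurry G)) (hfr : ν x₀ t ∉ frontier A) :
    HasDerivAt (fun x => A.indicator (fun v => G v t - G (ν x₀ t) t) (ν x t))
      (deriv (ν · t) x₀ • A.indicator (fun _ => deriv (G · t) (ν x₀ t)) (ν x₀ t)) x₀ := by
  have hGt := (differentiable_partial_fst hG t (ν x₀ t)).hasDerivAt
  have hνt := (differentiable_partial_fst hν t x₀).hasDerivAt
  exact (hasDerivAt_indicator_of_notMem_frontier hfr (hGt.sub_const _)).scomp x₀ hνt

lemma exists_norm_indicator_sub_comp_le (hν : ContDiff ℝ 1 (uncurry ν))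
    (hG : ContDiff ℝ 1 (uncurry G)) (A : Set ℝ) (x₀ : ℝ) {s : Set ℝ} (hs : IsCompact s) :
    ∃ B, ∀ t ∈ s, ∀ x ∈ Metric.closedBall x₀ 1,
      ‖A.indicator (fun v => G v t - G (ν x₀ t) t) (ν x t)‖ ≤ B * ‖x - x₀‖ := by
  have hH : ContDiff ℝ 1 (uncurry fun x t => G (ν x t) t) := hG.comp (hν.prodMk contDiff_snd)
  obtain ⟨B, hB⟩ := exists_norm_sub_le_mul_norm_sub_of_contDiff hH x₀ hs
  exact ⟨B, fun t ht x hx => (norm_indicator_le_norm_self _ _).trans (hB t ht x hx)⟩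

lemma intervalIntegrable_deriv_smul_indicator_deriv (hν : ContDiff ℝ 1 (uncurry ν))
    (hG : ContDiff ℝ 1 (uncurry G)) (hA : MeasurableSet A) :
    IntervalIntegrable
      (fun t => deriv (ν · t) x₀ • A.indicator (fun _ => deriv (G · t) (ν x₀ t)) (ν x₀ t))
      volume a b := by
  have hν_cont : Continuous (ν x₀) := hν.continuous.uncurry_left x₀
  have hν' : Continuous fun t => deriv (ν · t) x₀ :=
    (continuous_partialDeriv_fst hν).comp (continuous_const.prodMk continuous_id)
  have hG' : Continuous fun t => deriv (G · t) (ν x₀ t) :=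
    (continuous_partialDeriv_fst hG).comp (hν_cont.prodMk continuous_id)
  exact (intervalIntegrable_indicator_comp hA hν_cont.measurable
    (hG'.intervalIntegrable a b)).continuousOn_smul hν'.continuousOn

lemma hasDerivAt_integral_indicator_sub_comp (hν : ContDiff ℝ 1 (uncurry ν))
    (hG : ContDiff ℝ 1 (uncurry G)) (hA : MeasurableSet A)
    (hfr : ∀ᵐ t ∂volume.restrict (Ι a b), ν x₀ t ∉ frontier A) :
    HasDerivAt
      (fun x => ∫ t in a..b, A.indicator (fun v => G v t - G (ν x₀ t) t) (ν x t))
      (∫ t in a..b,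
        deriv (ν · t) x₀ • A.indicator (fun _ => deriv (G · t) (ν x₀ t)) (ν x₀ t)) x₀ := by
  have hν_meas : ∀ x, Measurable (ν x) := fun x => (hν.continuous.uncurry_left x).measurable
  have hGν : ∀ x, Continuous fun t => G (ν x t) t :=
    continuous_comp_uncurry_left hν.continuous hG.continuous
  obtain ⟨B, hB⟩ := exists_norm_indicator_sub_comp_le hν hG A x₀ (isCompact_uIcc (a := a) (b := b))
  have hB_int : IntegrableOn (fun _ => B) (Ι a b) := intervalIntegrable_const.def'
  have hzero : ∀ t, A.indicator (fun v => G v t - G (ν x₀ t) t) (ν x₀ t) = 0 := fun t =>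
    indicator_apply_eq_zero.2 fun _ => sub_self _
  simp only [intervalIntegral.intervalIntegral_eq_integral_uIoc]
  refine .const_smul _ <| hasDerivAt_integral_of_dominated_loc_of_norm_sub_le
    (Metric.closedBall_mem_nhds x₀ one_pos) (fun x _ => ?_) ?_ ?_ ?_ hB_int ?_
  · exact ((hGν x).sub (hGν x₀)).aestronglyMeasurable.indicator (hν_meas x hA)
  · simp [hzero]
  · exact (intervalIntegrable_deriv_smul_indicator_deriv hν hG hA).def'.aestronglyMeasurable
  · filter_upwards [ae_restrict_mem measurableSet_uIoc] with t ht x hx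
    simpa only [hzero, sub_zero] using hB t (uIoc_subset_uIcc ht) x hx
  · exact hfr.mono fun t ht => hasDerivAt_indicator_sub_comp hν hG ht

end MovingIntegrand

/-- The function `x ↦ ∫ t in a..b, f (ν x t) t` obeys the Leibniz rule at `x₀` up to a jump term
`J`: its derivative is the integral of the almost everywhere defined derivative of the integrand,
plus `J`. The integrability and differentiability fields make such rules additive in `f`. -/
structure LeibnizRuleWithJump (f : ℝ → ℝ → E) (ν : ℝ → ℝ → ℝ) (a b x₀ : ℝ) (J : E) : Prop where
  intervalIntegrable (x : ℝ) : IntervalIntegrable (fun t => f (ν x t) t) volume a b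
  ae_differentiableAt : ∀ᵐ t ∂volume.restrict (Ι a b), DifferentiableAt ℝ (f · t) (ν x₀ t)
  intervalIntegrable_deriv :
    IntervalIntegrable (fun t => deriv (ν · t) x₀ • deriv (f · t) (ν x₀ t)) volume a b
  hasDerivAt : HasDerivAt (fun x => ∫ t in a..b, f (ν x t) t)
    ((∫ t in a..b, deriv (ν · t) x₀ • deriv (f · t) (ν x₀ t)) + J) x₀

namespace LeibnizRuleWithJump

variable {f g G : ℝ → ℝ → E} {ν : ℝ → ℝ → ℝ} {a b c x₀ : ℝ} {A : Set ℝ} {J J' : E}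

lemma add (hf : LeibnizRuleWithJump f ν a b x₀ J) (hg : LeibnizRuleWithJump g ν a b x₀ J') :
    LeibnizRuleWithJump (fun v t => f v t + g v t) ν a b x₀ (J + J') := by
  have hderiv : (fun t => deriv (ν · t) x₀ • deriv (f · t) (ν x₀ t) +
        deriv (ν · t) x₀ • deriv (g · t) (ν x₀ t)) =ᵐ[volume.restrict (Ι a b)]
      fun t => deriv (ν · t) x₀ • deriv (fun v => f v t + g v t) (ν x₀ t) := by
    filter_upwards [hf.ae_differentiableAt, hg.ae_differentiableAt] with t hft hgt
    rw [deriv_fun_add hft hgt, smul_add]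
  refine ⟨fun x => (hf.intervalIntegrable x).add (hg.intervalIntegrable x), ?_,
    (hf.intervalIntegrable_deriv.add hg.intervalIntegrable_deriv).congr_ae hderiv, ?_⟩
  · filter_upwards [hf.ae_differentiableAt, hg.ae_differentiableAt] with t hft hgt
      using hft.add hgt
  · rw [← intervalIntegral.integral_congr_ae_restrict hderiv, intervalIntegral.integral_add
      hf.intervalIntegrable_deriv hg.intervalIntegrable_deriv, add_add_add_comm]
    simp only [intervalIntegral.integral_add (hf.intervalIntegrable _) (hg.intervalIntegrable _)]
    exact hf.hasDerivAt.add hg.hasDerivAt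

lemma zero : LeibnizRuleWithJump (fun _ _ => (0 : E)) ν a b x₀ 0 where
  intervalIntegrable _ := by simp
  ae_differentiableAt := by simp
  intervalIntegrable_deriv := by simp
  hasDerivAt := by simpa using hasDerivAt_const x₀ (0 : E)

lemma sum {ι : Type*} {s : Finset ι} {f : ι → ℝ → ℝ → E} {J : ι → E}
    (hf : ∀ i ∈ s, LeibnizRuleWithJump (f i) ν a b x₀ (J i)) :
    LeibnizRuleWithJump (fun v t => ∑ i ∈ s, f i v t) ν a b x₀ (∑ i ∈ s, J i) := by
  classical
  induction s using Finset.induction_on with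
  | empty => simpa using zero
  | insert i s hi ih =>
    simp only [Finset.sum_insert hi]
    rw [Finset.forall_mem_insert] at hf
    exact hf.1.add (ih hf.2)

lemma indicator_of_hasDerivAt_frozen (hν : ContDiff ℝ 1 (uncurry ν)) (hG : ContDiff ℝ 1 (uncurry G))
    (hA : MeasurableSet A) (hfr : ∀ᵐ t ∂volume.restrict (Ι a b), ν x₀ t ∉ frontier A)
    (hJ : HasDerivAt (fun x => ∫ t in a..b, A.indicator (fun _ => G (ν x₀ t) t) (ν x t)) J x₀) :
    LeibnizRuleWithJump (fun v t => A.indicator (G · t) v) ν a b x₀ J := by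
  have hν_cont : ∀ x, Continuous (ν x) := hν.continuous.uncurry_left
  have hGν : ∀ x, Continuous fun t => G (ν x t) t :=
    continuous_comp_uncurry_left hν.continuous hG.continuous
  have hG' : ∀ᵐ t ∂volume.restrict (Ι a b), HasDerivAt (A.indicator (G · t))
      (A.indicator (fun _ => deriv (G · t) (ν x₀ t)) (ν x₀ t)) (ν x₀ t) := hfr.mono fun t ht =>
    hasDerivAt_indicator_of_notMem_frontier ht (differentiable_partial_fst hG t _).hasDerivAt
  have hderiv : (fun t => deriv (ν · t) x₀ •
        A.indicator (fun _ => deriv (G · t) (ν x₀ t)) (ν x₀ t)) =ᵐ[volume.restrict (Ι a b)]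
      fun t => deriv (ν · t) x₀ • deriv (A.indicator (G · t)) (ν x₀ t) :=
    hG'.mono fun t ht => by simp only [ht.deriv]
  have hint : ∀ x, IntervalIntegrable (fun t => A.indicator (G · t) (ν x t)) volume a b :=
    fun x => intervalIntegrable_indicator_comp hA (hν_cont x).measurable
      ((hGν x).intervalIntegrable a b)
  have hfrozen : ∀ x, IntervalIntegrable (fun t => A.indicator (fun _ => G (ν x₀ t) t) (ν x t))
      volume a b := fun x => intervalIntegrable_indicator_comp hA (hν_cont x).measurable
      ((hGν x₀).intervalIntegrable a b)
  refine ⟨hint, hG'.mono fun t ht => ht.differentiableAt,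
    (intervalIntegrable_deriv_smul_indicator_deriv hν hG hA).congr_ae hderiv, ?_⟩
  rw [← intervalIntegral.integral_congr_ae_restrict hderiv]
  convert (hasDerivAt_integral_indicator_sub_comp hν hG hA hfr).add hJ using 2 with x
  simp only [Set.indicator_sub, Pi.add_apply]
  rw [intervalIntegral.integral_sub (hint x) (hfrozen x), sub_add_cancel]

lemma of_contDiff (hν : ContDiff ℝ 1 (uncurry ν)) (hG : ContDiff ℝ 1 (uncurry G)) :
    LeibnizRuleWithJump G ν a b x₀ 0 := by
  simpa using indicator_of_hasDerivAt_frozen (A := univ) hν hG .univ (by simp)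
    (by simpa using hasDerivAt_const x₀ _)

lemma indicator_Ici [CompleteSpace E] {S : Finset ℝ} (hν : ContDiff ℝ 1 (uncurry ν))
    (hG : ContDiff ℝ 1 (uncurry G)) (hab : a ≤ b) (ha : ν x₀ a ≠ c) (hb : ν x₀ b ≠ c)
    (hS : (S : Set ℝ) = {t | t ∈ Icc a b ∧ ν x₀ t = c}) (hSd : ∀ t ∈ S, deriv (ν x₀) t ≠ 0) :
    LeibnizRuleWithJump (fun v t => (Ici c).indicator (G · t) v) ν a b x₀
      (∑ t ∈ S, (deriv (ν · t) x₀ / |deriv (ν x₀) t|) • G c t) := by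
  have hmem : ∀ t, t ∈ S ↔ t ∈ Icc a b ∧ ν x₀ t = c := fun t => Set.ext_iff.1 hS t
  have hfr : ∀ᵐ t ∂volume.restrict (Ι a b), ν x₀ t ∉ frontier (Ici c) := by
    filter_upwards [ae_restrict_mem measurableSet_uIoc,
      ae_restrict_of_ae (S.countable_toSet.ae_notMem volume)] with t ht htS
    rw [frontier_Ici]
    exact fun htc => htS ((hmem t).2 ⟨uIcc_of_le hab ▸ uIoc_subset_uIcc ht, htc⟩)
  have hGν : Continuous fun t => G (ν x₀ t) t :=
    continuous_comp_uncurry_left hν.continuous hG.continuous x₀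
  have hJ := hasDerivAt_integral_superlevel hν hGν hab ha hb hS hSd
  have hval : ∀ t ∈ S, (deriv (ν · t) x₀ / |deriv (ν x₀) t|) • G (ν x₀ t) t =
      (deriv (ν · t) x₀ / |deriv (ν x₀) t|) • G c t := fun t ht => by rw [((hmem t).1 ht).2]
  rw [Finset.sum_congr rfl hval] at hJ
  exact indicator_of_hasDerivAt_frozen hν hG measurableSet_Ici hfr hJ

end LeibnizRuleWithJump

section Levels

variable {α : Type*} [LinearOrder α]

lemma exists_level_index (R : ℕ → α) (N : ℕ) (v : α) :
    ∃ k ≤ N, (k = 0 ∨ R k ≤ v) ∧ (k = N ∨ v < R (k + 1)) := by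
  classical
  refine ⟨Nat.findGreatest (R · ≤ v) N, Nat.findGreatest_le N, ?_, ?_⟩
  · exact (eq_or_ne _ 0).imp_right fun h => Nat.findGreatest_of_ne_zero rfl h
  · refine (Nat.findGreatest_le N).eq_or_lt.imp_right fun h => ?_
    exact not_le.1 (Nat.findGreatest_is_greatest (Nat.lt_succ_self _) h)

lemma eq_add_sum_indicator_Ici_jumps {M : Type*} [AddCommGroup M] {N : ℕ} {R : ℕ → α}
    (hR : MonotoneOn R (Icc 1 N)) {f : α → M} {p : ℕ → α → M}
    (hf : ∀ j, 1 ≤ j → j ≤ N + 1 → ∀ v,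
      (j = 1 ∨ R (j - 1) ≤ v) → (j = N + 1 ∨ v < R j) → f v = p j v) (v : α) :
    f v = p 1 v + ∑ i ∈ Finset.Icc 1 N, (Ici (R i)).indicator (p (i + 1) - p i) v := by
  obtain ⟨k, hkN, hk, hk'⟩ := exists_level_index R N v
  have hlevel : ∀ i ∈ Finset.Icc 1 N, (R i ≤ v ↔ i ≤ k) := by
    intro i hi
    rw [Finset.mem_Icc] at hi
    constructor
    · intro hiv
      by_contra! hki
      have hvk : v < R (k + 1) := hk'.resolve_left (by omega)
      exact absurd (hR ⟨by omega, by omega⟩ hi hki) (not_le.2 (hiv.trans_lt hvk))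
    · intro hik
      have hkv : R k ≤ v := hk.resolve_left (by omega)
      exact (hR hi ⟨by omega, hkN⟩ hik).trans hkv
  have hfilter : {i ∈ Finset.Icc 1 N | R i ≤ v} = Finset.Ico 1 (k + 1) := by
    ext i
    rw [Finset.mem_filter, and_congr_right (hlevel i), Finset.mem_Icc, Finset.mem_Ico]
    omega
  have htelescope : ∑ i ∈ Finset.Icc 1 N, (Ici (R i)).indicator (p (i + 1) - p i) v =
      p (k + 1) v - p 1 v := by
    simp only [Set.indicator, mem_Ici, Pi.sub_apply]
    rw [← Finset.sum_filter, hfilter, Finset.sum_Ico_sub (p · v) (by omega)]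
  rw [htelescope, add_sub_cancel]
  exact hf (k + 1) (by omega) (by omega) v (hk.imp_left (by omega)) (hk'.imp_left (by omega))

end Levels

theorem deriv_integral_piecewise_with_jumps_general [CompleteSpace E] {N : ℕ} {R : ℕ → ℝ}
    (hR : MonotoneOn R (Icc 1 N)) {Fc : ℕ → ℝ → ℝ → E}
    (hFc : ∀ α, 1 ≤ α → α ≤ N + 1 → ContDiff ℝ 1 (uncurry (Fc α))) {F : ℝ → ℝ → E}
    (hF : ∀ α, 1 ≤ α → α ≤ N + 1 → ∀ v t,
      (α = 1 ∨ R (α - 1) ≤ v) → (α = N + 1 ∨ v < R α) → F v t = Fc α v t)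
    {ν : ℝ → ℝ → ℝ} (hν : ContDiff ℝ 1 (uncurry ν)) {a b x₀ : ℝ} (hab : a ≤ b)
    (hend : ∀ i, 1 ≤ i → i ≤ N → ν x₀ a ≠ R i ∧ ν x₀ b ≠ R i) {T : ℕ → Finset ℝ}
    (hT : ∀ i, 1 ≤ i → i ≤ N → (T i : Set ℝ) = {t | t ∈ Icc a b ∧ ν x₀ t = R i})
    (hTd : ∀ i, 1 ≤ i → i ≤ N → ∀ t ∈ T i, deriv (ν x₀) t ≠ 0) :
    HasDerivAt (fun x => ∫ t in a..b, F (ν x t) t)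
      ((∫ t in a..b, deriv (ν · t) x₀ • deriv (F · t) (ν x₀ t)) +
        ∑ i ∈ Finset.Icc 1 N, ∑ t ∈ T i,
          (deriv (ν · t) x₀ / |deriv (ν x₀) t|) • (Fc (i + 1) (R i) t - Fc i (R i) t)) x₀ := by
  have hdecomp : F = fun v t => Fc 1 v t +
      ∑ i ∈ Finset.Icc 1 N, (Ici (R i)).indicator (fun w => Fc (i + 1) w t - Fc i w t) v := by
    ext v t
    exact eq_add_sum_indicator_Ici_jumps hR (f := (F · t)) (p := fun α w => Fc α w t)
      (fun α h₁ h₂ w => hF α h₁ h₂ w t) v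
  have hbase : LeibnizRuleWithJump (Fc 1) ν a b x₀ 0 := .of_contDiff hν (hFc 1 le_rfl (by omega))
  have hjumps := LeibnizRuleWithJump.sum (s := Finset.Icc 1 N) fun i hi => by
    obtain ⟨h₁, hN⟩ := Finset.mem_Icc.1 hi
    exact LeibnizRuleWithJump.indicator_Ici (G := fun v t => Fc (i + 1) v t - Fc i v t) hν
      ((hFc (i + 1) (by omega) (by omega)).sub (hFc i h₁ (by omega))) hab (hend i h₁ hN).1
      (hend i h₁ hN).2 (hT i h₁ hN) (hTd i h₁ hN)
  simpa only [hdecomp, zero_add] using (hbase.add hjumps).hasDerivAt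

theorem deriv_integral_piecewise_with_jumps
    (N : ℕ) (R : ℕ → ℝ) (hR0 : R 0 = 0)
    (hRmono : ∀ i j : ℕ, i < j → j ≤ N → R i < R j)
    (Fc : ℕ → ℝ → ℝ → ℝ)
    (hFc : ∀ α : ℕ, 1 ≤ α → α ≤ N + 1 →
      ContDiff ℝ 1 (fun q : ℝ × ℝ => Fc α q.1 q.2))
    (F : ℝ → ℝ → ℝ)
    (hF : ∀ α : ℕ, 1 ≤ α → α ≤ N + 1 → ∀ v t : ℝ,
      (α = 1 ∨ R (α - 1) ≤ v) → (α = N + 1 ∨ v < R α) → F v t = Fc α v t)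
    (ν : ℝ → ℝ → ℝ)
    (hν : ContDiff ℝ 1 (fun q : ℝ × ℝ => ν q.1 q.2))
    (xbar : ℝ)
    (hend : ∀ i : ℕ, 1 ≤ i → i ≤ N → ν xbar 0 ≠ R i ∧ ν xbar 1 ≠ R i)
    (T : ℕ → Finset ℝ)
    (hT : ∀ i : ℕ, 1 ≤ i → i ≤ N →
      (↑(T i) : Set ℝ) = {t : ℝ | t ∈ Set.Icc (0 : ℝ) 1 ∧ ν xbar t = R i})
    (hTd : ∀ i : ℕ, 1 ≤ i → i ≤ N → ∀ t₀ ∈ T i, deriv (ν xbar) t₀ ≠ 0) :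
    HasDerivAt (fun x : ℝ => ∫ t in (0 : ℝ)..1, F (ν x t) t)
      ((∫ t in (0 : ℝ)..1,
          deriv (fun v => F v t) (ν xbar t) * deriv (fun x' => ν x' t) xbar) +
        ∑ i ∈ Finset.Icc 1 N, ∑ t₀ ∈ T i,
          (Fc (i + 1) (R i) t₀ - Fc i (R i) t₀) *
            (deriv (fun x' => ν x' t₀) xbar / |deriv (ν xbar) t₀|)) xbar := by
  have hR : MonotoneOn R (Icc 1 N) :=
    StrictMonoOn.monotoneOn fun i _ j hj hij => hRmono i j hij hj.2
  simpa only [smul_eq_mul, mul_comm] using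
    deriv_integral_piecewise_with_jumps_general hR hFc hF hν zero_le_one hend hT hTd
end
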